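/- Let n ≥ 3 be odd and let k > n. Then there is no element g of the dihedral-type Artin group I_2(n) with g^k = (xy)^n. -/

import Mathlib

/-!
The degree homomorphism `x, y ↦ 1` to `ℤ` sends `(xy)^n` to `2n`, so a `k`-th root `g` with `k > n`
forces `k = 2n` and `g` of degree `1` (`degHom`). Such a `g` is excluded by a polynomial family of
representations in dimension two. Write `n = 2m + 1`. If `a² = 1` and `w^n = 1` in a group, then
`x ↦ wa`, `y ↦ aw` respects the relation, both sides becoming `a`, and `(xy)^n` becomes `1`.
Take `w = diag(1, ω)` with `ω` a primitive `n`-th root of unity, and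
`a = !![s, 1 - s²; 1, -s]` with `s` an indeterminate.

For every complex value of `s` the image of `g` is a matrix with `k`-th power `1`, so its trace is a
sum of two `k`-th roots of unity. The trace is therefore a polynomial in `s` with finitely many
values, hence constant (`eval_eq_of_finite_range`). On the other hand, at `s = ±1` the
representation is lower triangular, so its diagonal entries are characters and depend only on the
degree (`lower_triangular`): the trace of `g` is `1 - ω` at `s = 1` and `ω - 1` at `s = -1`.
Equality would give `ω = 1`, contradicting `n ≥ 3`.
-/

open FreeGroup

/-- The alternating product `⟨x,y⟩^m = xyxy⋯` of length `m`. -/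
def altProd {M : Type*} [Monoid M] (x y : M) : ℕ → M
  | 0 => 1
  | k + 1 => x * altProd y x k

/-- The single relator `⟨x,y⟩ⁿ (⟨y,x⟩ⁿ)⁻¹` of the dihedral-type Artin group `I₂(n)`,
with generators `x = of 0` and `y = of 1`. -/
def ArtinI2Rels (n : ℕ) : Set (FreeGroup (Fin 2)) :=
  {altProd (of 0) (of 1) n * (altProd (of 1) (of 0) n)⁻¹}

/-- The dihedral-type Artin group `I₂(n)`. -/
abbrev ArtinI2 (n : ℕ) : Type := PresentedGroup (ArtinI2Rels n)

open Polynomial in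
/-- A complex polynomial taking values in a finite set is constant. -/
lemma eval_eq_of_finite_range (p : ℂ[X]) (F : Set ℂ) (hF : F.Finite)
    (h : ∀ s : ℂ, p.eval s ∈ F) (s t : ℂ) : p.eval s = p.eval t := by
  by_cases hd : p.degree ≤ 0
  · rw [eq_C_of_degree_le_zero hd]; simp
  · exfalso
    -- A nonconstant complex polynomial is surjective, so `F` would be all of `ℂ`.
    have huniv : F = Set.univ := by
      refine Set.eq_univ_of_forall fun z => ?_
      have hz : 0 < (p - C z).degree := by
        rw [degree_sub_C (not_le.mp hd)]; exact not_le.mp hd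
      obtain ⟨r, hr⟩ := Complex.exists_root hz
      have : p.eval r = z := by simpa [IsRoot, sub_eq_zero] using hr
      exact this ▸ h r
    exact Set.infinite_univ (huniv ▸ hF)

/-- The sums of two complex `k`-th roots of unity. -/
def rootSums (k : ℕ) : Set ℂ :=
  (fun z : ℂ × ℂ => z.1 + z.2) '' ({z | z ^ k = 1} ×ˢ {z | z ^ k = 1})

lemma rootSums_finite {k : ℕ} (hk : 0 < k) : (rootSums k).Finite := by
  have h : {z : ℂ | z ^ k = 1}.Finite := by
    refine (Polynomial.nthRootsFinset k (1 : ℂ)).finite_toSet.subset fun z hz => ?_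
    simpa [Polynomial.mem_nthRootsFinset hk] using hz
  exact (h.prod h).image _

lemma trace_mem_rootSums {k : ℕ} (M : Matrix (Fin 2) (Fin 2) ℂ) (hM : M ^ k = 1) :
    M.trace ∈ rootSums k := by
  have hroot : ∀ z ∈ M.charpoly.roots, z ^ k = 1 := by
    intro z hz
    have h1 : z ∈ spectrum ℂ M :=
      Matrix.mem_spectrum_of_isRoot_charpoly (Polynomial.isRoot_of_mem_roots hz)
    have h2 := spectrum.pow_mem_pow M k h1
    rw [hM, spectrum.one_eq] at h2
    exact h2
  have hcard : M.charpoly.roots.card = 2 := by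
    rw [← (IsAlgClosed.splits M.charpoly).natDegree_eq_card_roots, Matrix.charpoly_natDegree_eq_dim]
    simp
  obtain ⟨z, z', hzz⟩ := Multiset.card_eq_two.mp hcard
  rw [hzz] at hroot
  refine ⟨(z, z'), ⟨hroot z (by simp), hroot z' (by simp)⟩, ?_⟩
  rw [Matrix.trace_eq_sum_roots_charpoly, hzz]
  simp

lemma map_altProd {M N : Type*} [Monoid M] [Monoid N] (f : M →* N) (x y : M) (k : ℕ) :
    f (altProd x y k) = altProd (f x) (f y) k := by
  induction k generalizing x y with
  | zero => simp [altProd]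
  | succ k ih => simp [altProd, ih]

lemma altProd_odd {M : Type*} [Monoid M] (x y : M) (m : ℕ) :
    altProd x y (2 * m + 1) = (x * y) ^ m * x := by
  induction m with
  | zero => simp [altProd]
  | succ m ih =>
    rw [show 2 * (m + 1) + 1 = (2 * m + 1) + 1 + 1 by ring, altProd, altProd, ih, pow_succ']
    simp only [mul_assoc]

/-- The homomorphism from `I₂(2m+1)` with prescribed values on `x` and `y`. -/
def artinLift {G : Type*} [Group G] (m : ℕ) (x y : G)
    (h : (x * y) ^ m * x = (y * x) ^ m * y) : ArtinI2 (2 * m + 1) →* G :=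
  PresentedGroup.toGroup (f := ![x, y]) (by
    rintro r rfl
    rw [_root_.map_mul, _root_.map_inv, map_altProd, map_altProd, mul_inv_eq_one, altProd_odd, altProd_odd]
    simpa using h)

@[simp] lemma artinLift_zero {G : Type*} [Group G] (m : ℕ) (x y : G)
    (h : (x * y) ^ m * x = (y * x) ^ m * y) :
    artinLift m x y h (PresentedGroup.of 0) = x := by
  simp [artinLift]

@[simp] lemma artinLift_one {G : Type*} [Group G] (m : ℕ) (x y : G)
    (h : (x * y) ^ m * x = (y * x) ^ m * y) :
    artinLift m x y h (PresentedGroup.of 1) = y := by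
  simp [artinLift]

/-- The degree homomorphism `x, y ↦ 1`, with the integers written multiplicatively. -/
def degHom (m : ℕ) : ArtinI2 (2 * m + 1) →* Multiplicative ℤ :=
  artinLift m (Multiplicative.ofAdd 1) (Multiplicative.ofAdd 1) rfl

/-- The images `wa` of `x` and `aw` of `y` satisfy the Artin relation (in the form of
`altProd_odd`), since both of its sides reduce to `a`. -/
lemma relation_of_involution {G : Type*} [Group G] (m : ℕ) (a w : G) (ha : a * a = 1)
    (hw : w ^ (2 * m + 1) = 1) :
    ((w * a) * (a * w)) ^ m * (w * a) = ((a * w) * (w * a)) ^ m * (a * w) := by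
  have h1 : (w * a) * (a * w) = w ^ 2 := by
    rw [mul_assoc, ← mul_assoc a a w, ha, one_mul, sq]
  have h2 : (a * w) * (w * a) = a * w ^ 2 * a⁻¹ := by
    rw [← eq_inv_of_mul_eq_one_left ha, sq]; simp only [mul_assoc]
  have ha' : a⁻¹ * a = 1 := inv_mul_cancel a
  rw [h1, h2, conj_pow, ← pow_mul, ← mul_assoc, ← pow_succ, hw, one_mul, mul_assoc,
    ← mul_assoc a⁻¹, ha', one_mul, mul_assoc, ← pow_succ, hw, mul_one]

/-- If both generators act by lower triangular matrices with diagonal `(u, v)`, then each element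
acts by a lower triangular matrix whose diagonal entries are powers of `u`, `v` given by
the degree. -/
lemma lower_triangular {m : ℕ} (φ : ArtinI2 (2 * m + 1) →* (Matrix (Fin 2) (Fin 2) ℂ)ˣ)
    (u v : ℂ) (hu : u ≠ 0) (hv : v ≠ 0)
    (h : ∀ i, (φ (PresentedGroup.of i)).val 0 1 = 0 ∧ (φ (PresentedGroup.of i)).val 0 0 = u ∧
      (φ (PresentedGroup.of i)).val 1 1 = v) (g : ArtinI2 (2 * m + 1)) :
    (φ g).val 0 1 = 0 ∧ (φ g).val 0 0 = u ^ (degHom m g).toAdd ∧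
      (φ g).val 1 1 = v ^ (degHom m g).toAdd := by
  have hg : g ∈ Subgroup.closure (Set.range (PresentedGroup.of (rels := ArtinI2Rels (2 * m + 1)))) := by
    rw [PresentedGroup.closure_range_of]; trivial
  induction hg using Subgroup.closure_induction with
  | mem x hx =>
    obtain ⟨i, rfl⟩ := hx
    have hd : degHom m (PresentedGroup.of i) = Multiplicative.ofAdd 1 := by
      fin_cases i
      · exact artinLift_zero ..
      · exact artinLift_one ..
    rw [hd]
    simpa using h i
  | one => simp
  | mul x y _ _ hx hy =>
    obtain ⟨hx1, hx2, hx3⟩ := hx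
    obtain ⟨hy1, hy2, hy3⟩ := hy
    simp [Matrix.mul_apply, Fin.sum_univ_two, zpow_add₀, *]
  | inv x _ hx =>
    obtain ⟨hx1, hx2, hx3⟩ := hx
    have hmul : (φ x).val * (φ x⁻¹).val = 1 := by
      rw [← Units.val_mul, ← _root_.map_mul, mul_inv_cancel, _root_.map_one, Units.val_one]
    have e (i j) := congrFun (congrFun hmul i) j
    have e00 := e 0 0
    have e01 := e 0 1
    have e11 := e 1 1
    simp only [Matrix.mul_apply, Fin.sum_univ_two, hx1, hx2, hx3, Matrix.one_apply_eq,
      Matrix.one_apply_ne (show (0 : Fin 2) ≠ 1 by decide), zero_mul, add_zero] at e00 e01 e11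
    have h01 : (φ x⁻¹).val 0 1 = 0 :=
      (mul_eq_zero.mp e01).resolve_left (zpow_ne_zero _ hu)
    rw [h01, mul_zero, zero_add] at e11
    rw [_root_.map_inv (degHom m), toAdd_inv, zpow_neg, zpow_neg]
    exact ⟨h01, eq_inv_of_mul_eq_one_right e00, eq_inv_of_mul_eq_one_right e11⟩

open Polynomial in
/-- The involution `!![s, 1 - s²; 1, -s]` over `ℂ[s]`. -/
noncomputable def involution : (Matrix (Fin 2) (Fin 2) ℂ[X])ˣ :=
  have h : !![X, 1 - X ^ 2; 1, -X] * !![X, 1 - X ^ 2; 1, -X] = (1 : Matrix (Fin 2) (Fin 2) ℂ[X]) := by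
    rw [Matrix.mul_fin_two, Matrix.one_fin_two]
    congr! 3 <;> ring_nf
  ⟨!![X, 1 - X ^ 2; 1, -X], !![X, 1 - X ^ 2; 1, -X], h, h⟩

open Polynomial in
/-- The matrix `diag(1, ω)` over `ℂ[s]`, for an `n`-th root of unity `ω`. -/
noncomputable def diagRoot (n : ℕ) (hn : n ≠ 0) (ω : ℂ) (hω : ω ^ n = 1) :
    (Matrix (Fin 2) (Fin 2) ℂ[X])ˣ :=
  Units.ofPowEqOne (Matrix.diagonal ![1, C ω]) n (by
    rw [Matrix.diagonal_pow, ← Matrix.diagonal_one]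
    congr 1
    ext1 i
    fin_cases i
    · simp
    · simp [← C_pow, hω]) hn

open Polynomial in
/-- The representation `x ↦ wa`, `y ↦ aw` over `ℂ[s]`, with `a = involution` and
`w = diag(1, ω)`. -/
noncomputable def polyRep (m : ℕ) (ω : ℂ) (hω : ω ^ (2 * m + 1) = 1) :
    ArtinI2 (2 * m + 1) →* (Matrix (Fin 2) (Fin 2) ℂ[X])ˣ :=
  artinLift m (diagRoot (2 * m + 1) (by lia) ω hω * involution)
    (involution * diagRoot (2 * m + 1) (by lia) ω hω)
    (relation_of_involution m _ _ (Units.ext involution.val_inv) (Units.pow_ofPowEqOne _ _))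

/-- The specialization of `polyRep` at a complex value of `s`. -/
noncomputable def evalRep (m : ℕ) (ω : ℂ) (hω : ω ^ (2 * m + 1) = 1) (s : ℂ) :
    ArtinI2 (2 * m + 1) →* (Matrix (Fin 2) (Fin 2) ℂ)ˣ :=
  (Units.map (Polynomial.evalRingHom s).mapMatrix.toMonoidHom).comp
    (polyRep m ω hω)

lemma trace_evalRep (m : ℕ) (ω : ℂ) (hω : ω ^ (2 * m + 1) = 1) (s : ℂ)
    (g : ArtinI2 (2 * m + 1)) :
    (evalRep m ω hω s g).val.trace = (polyRep m ω hω g).val.trace.eval s := by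
  simp [evalRep, Matrix.trace_fin_two]

lemma evalRep_center (m : ℕ) (ω : ℂ) (hω : ω ^ (2 * m + 1) = 1) (s : ℂ) :
    evalRep m ω hω s ((PresentedGroup.of 0 * PresentedGroup.of 1) ^ (2 * m + 1)) = 1 := by
  have hinv : involution * involution = 1 := Units.ext involution.val_inv
  have hw : diagRoot (2 * m + 1) (by lia) ω hω ^ (2 * m + 1) = 1 := Units.pow_ofPowEqOne _ _
  have h : polyRep m ω hω ((PresentedGroup.of 0 * PresentedGroup.of 1) ^ (2 * m + 1)) = 1 := by
    rw [_root_.map_pow, _root_.map_mul, polyRep, artinLift_zero, artinLift_one, mul_assoc,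
      ← mul_assoc involution, hinv, one_mul, ← sq, pow_right_comm, hw, one_pow]
  rw [evalRep, MonoidHom.comp_apply, h, _root_.map_one]

/-- At `s = ε = ±1` the representation is lower triangular, with diagonal `(ε, -εω)` on both
generators. -/
lemma trace_evalRep_of_sq_eq_one (m : ℕ) (ω : ℂ) (hω : ω ^ (2 * m + 1) = 1) (ε : ℂ) (hε : ε ^ 2 = 1)
    (g : ArtinI2 (2 * m + 1)) (hg : (degHom m g).toAdd = 1) :
    (evalRep m ω hω ε g).val.trace = ε - ε * ω := by
  have hω0 : ω ≠ 0 := by rintro rfl; simp at hω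
  have hε0 : ε ≠ 0 := by rintro rfl; simp at hε
  have h := lower_triangular (evalRep m ω hω ε) ε (-(ε * ω)) hε0
    (neg_ne_zero.mpr (mul_ne_zero hε0 hω0)) (by
      intro i
      fin_cases i <;>
      simp [evalRep, polyRep, diagRoot, involution, hε, mul_comm]) g
  rw [hg, zpow_one, zpow_one] at h
  rw [Matrix.trace_fin_two, h.2.1, h.2.2, sub_eq_add_neg]

/-- For odd `n ≥ 3` and `k > n`, the generator `(xy)^n` of the center of the
dihedral-type Artin group `I₂(n)` has no `k`-th root. -/
theorem artinI2_odd_no_root (n k : ℕ) (hn : 3 ≤ n) (hno : Odd n) (hk : n < k) :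
    ¬ ∃ g : ArtinI2 n, g ^ k =
      ((PresentedGroup.of 0 : ArtinI2 n) * PresentedGroup.of 1) ^ n := by
  rintro ⟨g, hg⟩
  obtain ⟨m, rfl⟩ := hno
  have hdeg : (k : ℤ) * (degHom m g).toAdd = 2 * (2 * m + 1) := by
    have h := congrArg (fun z => (degHom m z).toAdd) hg
    simp only [_root_.map_pow, _root_.map_mul, degHom, artinLift_zero, artinLift_one, toAdd_pow, toAdd_mul,
      toAdd_ofAdd, nsmul_eq_mul] at h
    rw [degHom, h]
    push_cast
    ring
  -- `k > n` and `k * deg g = 2n` leave only degree one.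
  have hdeg1 : (degHom m g).toAdd = 1 := by
    have hk' : (2 * m + 1 : ℤ) < k := by exact_mod_cast hk
    have hpos : 0 < (degHom m g).toAdd := by
      by_contra! hle
      nlinarith
    have hlt : (degHom m g).toAdd < 2 := by
      by_contra! hle
      nlinarith
    lia
  obtain ⟨ω, hω⟩ : ∃ ω : ℂ, IsPrimitiveRoot ω (2 * m + 1) :=
    ⟨_, Complex.isPrimitiveRoot_exp _ (by lia)⟩
  have hmem (s : ℂ) : (polyRep m ω hω.pow_eq_one g).val.trace.eval s ∈ rootSums k := by
    rw [← trace_evalRep]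
    apply trace_mem_rootSums
    rw [← Units.val_pow_eq_pow_val, ← _root_.map_pow, hg, evalRep_center, Units.val_one]
  have hconst := eval_eq_of_finite_range _ _ (rootSums_finite (by lia)) hmem 1 (-1)
  rw [← trace_evalRep, ← trace_evalRep,
    trace_evalRep_of_sq_eq_one _ _ _ 1 (by norm_num) _ hdeg1,
    trace_evalRep_of_sq_eq_one _ _ _ (-1) (by norm_num) _ hdeg1] at hconst
  refine hω.ne_one (by lia) ?_
  linear_combination -hconst / 2
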